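/- arXiv:1610.06390 — 2 statements merged into one kernel-verified Lean document; each statement's English description precedes it below -/
import Mathlib

section
/- One has θ0i∧θ1j = −θ0j∧θ1i = −θ0k∧θs, and the identities obtained by cyclically permuting (i,j,k) hold as well: θ0j∧θ1k = −θ0k∧θ1j = −θ0i∧θs and θ0k∧θ1i = −θ0i∧θ1k = −θ0j∧θs. -/
/-! The 2-forms `θ0i`, `θ0j`, `θ0k` in the `dy`s annihilate each other, because every term of such
a product repeats a factor. Their coefficient matrices `I`, `J`, `K` satisfy the quaternion
relations. The derivation `D` of the exterior algebra with `D dy_a = ∑ A_ab dx_b` sends `θ0i` to the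
mixed form `⟨I A⟩`, where `⟨B⟩ = ∑ B_ab dy_a ∧ dx_b`, and similarly for `j` and `k`. Applying `D` to
`θ0i ∧ θ0j = 0` gives `θ0i ∧ ⟨J A⟩ = -θ0j ∧ ⟨I A⟩` for every matrix `A`, and cyclically. Since
`⟨I⟩ = θ1i` and `⟨-1⟩ = θs`, the choices `A = 1` and `A = I, J, K` yield all the identities. -/

noncomputable section

open ExteriorAlgebra

/-- Basis 1-forms of the dual of `ℝ^8`, modelled as generators of the exterior algebra of an
8-dimensional real vector space. -/
def e8 (i : Fin 8) : ExteriorAlgebra ℝ (Fin 8 → ℝ) :=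
  ExteriorAlgebra.ι ℝ (Pi.single i 1)

def dx1 : ExteriorAlgebra ℝ (Fin 8 → ℝ) := e8 0
def dx2 : ExteriorAlgebra ℝ (Fin 8 → ℝ) := e8 1
def dx3 : ExteriorAlgebra ℝ (Fin 8 → ℝ) := e8 2
def dx4 : ExteriorAlgebra ℝ (Fin 8 → ℝ) := e8 3
def dy1 : ExteriorAlgebra ℝ (Fin 8 → ℝ) := e8 4
def dy2 : ExteriorAlgebra ℝ (Fin 8 → ℝ) := e8 5
def dy3 : ExteriorAlgebra ℝ (Fin 8 → ℝ) := e8 6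
def dy4 : ExteriorAlgebra ℝ (Fin 8 → ℝ) := e8 7

def θ0i : ExteriorAlgebra ℝ (Fin 8 → ℝ) := dy1 * dy2 - dy3 * dy4
def θ0j : ExteriorAlgebra ℝ (Fin 8 → ℝ) := dy1 * dy3 + dy2 * dy4
def θ0k : ExteriorAlgebra ℝ (Fin 8 → ℝ) := dy1 * dy4 - dy2 * dy3
def θ1i : ExteriorAlgebra ℝ (Fin 8 → ℝ) := dy1 * dx2 - dy2 * dx1 + dy4 * dx3 - dy3 * dx4
def θ1j : ExteriorAlgebra ℝ (Fin 8 → ℝ) := dy1 * dx3 + dy2 * dx4 - dy3 * dx1 - dy4 * dx2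
def θ1k : ExteriorAlgebra ℝ (Fin 8 → ℝ) := dy1 * dx4 - dy4 * dx1 + dy3 * dx2 - dy2 * dx3
def θ2i : ExteriorAlgebra ℝ (Fin 8 → ℝ) := dx1 * dx2 - dx3 * dx4
def θ2j : ExteriorAlgebra ℝ (Fin 8 → ℝ) := dx1 * dx3 + dx2 * dx4
def θ2k : ExteriorAlgebra ℝ (Fin 8 → ℝ) := dx1 * dx4 - dx2 * dx3
def θs : ExteriorAlgebra ℝ (Fin 8 → ℝ) := -(dy1 * dx1 + dy2 * dx2 + dy3 * dx3 + dy4 * dx4)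

section InducedDerivation

variable {R M : Type*} [CommRing R] [AddCommGroup M] [Module R M]

theorem ι_mul_ι_mem_center (v w : M) :
    ι R v * ι R w ∈ Subalgebra.center R (ExteriorAlgebra R M) := by
  have swap (x y : M) : ι R x * ι R y = -(ι R y * ι R x) :=
    eq_neg_of_add_eq_zero_left (ι_add_mul_swap x y)
  rw [Subalgebra.mem_center_iff]
  intro z
  induction z using ExteriorAlgebra.induction with
  | algebraMap r => exact Algebra.commutes r _
  | ι u => rw [← mul_assoc, swap u v, neg_mul, mul_assoc, swap u w, mul_neg, neg_neg, mul_assoc]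
  | mul x y hx hy => exact (Commute.mul_left hx hy : Commute (x * y) _)
  | add x y hx hy => exact (Commute.add_left hx hy : Commute (x + y) _)

theorem ι_mul_ι_mul_ι_mul_ι_eq_zero_of_not_nodup {I : Type*} (v : I → M) {a b c d : I}
    (h : ¬[a, b, c, d].Nodup) : ι R (v a) * ι R (v b) * (ι R (v c) * ι R (v d)) = 0 := by
  have not_inj : ¬Function.Injective (v ∘ ![a, b, c, d]) := fun hv =>
    h (by simpa using List.nodup_ofFn.2 hv.of_comp)
  simpa [Matrix.vecTail, mul_assoc] using ιMulti_eq_zero_of_not_inj (R := R) not_inj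

/-- The algebra homomorphism `z ↦ z + ε D z` to the dual numbers over the exterior algebra which
sends a vector `v` to `v + ε f v`; its `ε`-component is the derivation `D` induced by `f`. -/
def toDualNumber (f : Module.End R M) :
    ExteriorAlgebra R M →ₐ[R] DualNumber (ExteriorAlgebra R M) :=
  ExteriorAlgebra.lift R
    ⟨(TrivSqZeroExt.inlAlgHom R _ _).toLinearMap ∘ₗ ι R +
      ((TrivSqZeroExt.inrHom (ExteriorAlgebra R M) _).restrictScalars R) ∘ₗ ι R ∘ₗ f, fun v => by
      ext <;> simp [ι_add_mul_swap]⟩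

theorem toDualNumber_ι (f : Module.End R M) (v : M) :
    toDualNumber f (ι R v) = TrivSqZeroExt.inl (ι R v) + TrivSqZeroExt.inr (ι R (f v)) := by
  simp [toDualNumber]

theorem fst_toDualNumber (f : Module.End R M) (z : ExteriorAlgebra R M) :
    (toDualNumber f z).fst = z := by
  have h : (TrivSqZeroExt.fstHom R _ _).comp (toDualNumber f) = AlgHom.id R _ := by
    ext v
    simp [toDualNumber_ι]
  exact DFunLike.congr_fun h z

/-- The derivation of the exterior algebra which extends an endomorphism of the module. -/
def inducedDerivation (f : Module.End R M) : Module.End R (ExteriorAlgebra R M) :=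
  ((TrivSqZeroExt.sndHom (ExteriorAlgebra R M) _).restrictScalars R) ∘ₗ
    (toDualNumber f).toLinearMap

theorem inducedDerivation_ι (f : Module.End R M) (v : M) :
    inducedDerivation f (ι R v) = ι R (f v) := by
  simp [inducedDerivation, toDualNumber_ι]

theorem inducedDerivation_mul (f : Module.End R M) (z w : ExteriorAlgebra R M) :
    inducedDerivation f (z * w) = z * inducedDerivation f w + inducedDerivation f z * w := by
  simp [inducedDerivation, fst_toDualNumber]

theorem mul_inducedDerivation_eq_neg (f : Module.End R M) {z w : ExteriorAlgebra R M}
    (hzw : z * w = 0) (hw : w ∈ Subalgebra.center R (ExteriorAlgebra R M)) :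
    z * inducedDerivation f w = -(w * inducedDerivation f z) := by
  rw [← Subalgebra.mem_center_iff.1 hw]
  apply eq_neg_of_add_eq_zero_left
  rw [← inducedDerivation_mul, hzw, map_zero]

end InducedDerivation

/-- The 1-form `dx_{a+1}`, indexed from zero. -/
def dx (a : Fin 4) : ExteriorAlgebra ℝ (Fin 8 → ℝ) := e8 (Fin.castAdd 4 a)

/-- The 1-form `dy_{a+1}`, indexed from zero. -/
def dy (a : Fin 4) : ExteriorAlgebra ℝ (Fin 8 → ℝ) := e8 (Fin.natAdd 4 a)

/-- The mixed 2-form `∑ A_ab dy_a ∧ dx_b` with coefficient matrix `A`. -/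
def dydx : Matrix (Fin 4) (Fin 4) ℝ →ₗ[ℝ] ExteriorAlgebra ℝ (Fin 8 → ℝ) where
  toFun A := ∑ a, ∑ b, A a b • (dy a * dx b)
  map_add' A B := by simp only [Matrix.add_apply, add_smul, Finset.sum_add_distrib]
  map_smul' r A := by
    simp only [Matrix.smul_apply, smul_assoc, Finset.smul_sum, RingHom.id_apply]

/-- The endomorphism `dy_a ↦ ∑ A_ab dx_b`, `dx_a ↦ 0` of the space of 1-forms. -/
def dyToDx (A : Matrix (Fin 4) (Fin 4) ℝ) : Module.End ℝ (Fin 8 → ℝ) :=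
  (Pi.basisFun ℝ (Fin 8)).constr ℝ
    (Fin.append 0 fun a => ∑ b, A a b • Pi.single (Fin.castAdd 4 b) 1)

/-- The skew-symmetric matrix of the bivector `e_a ∧ e_b`. -/
def skewUnit (a b : Fin 4) : Matrix (Fin 4) (Fin 4) ℝ := .single a b 1 - .single b a 1

/-- The skew-symmetric matrix of `θ0i`, acting on `ℝ⁴` as the quaternion unit `i`. -/
def unitI : Matrix (Fin 4) (Fin 4) ℝ := skewUnit 0 1 - skewUnit 2 3

/-- The skew-symmetric matrix of `θ0j`, acting on `ℝ⁴` as the quaternion unit `j`. -/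
def unitJ : Matrix (Fin 4) (Fin 4) ℝ := skewUnit 0 2 + skewUnit 1 3

/-- The skew-symmetric matrix of `θ0k`, acting on `ℝ⁴` as the quaternion unit `k`. -/
def unitK : Matrix (Fin 4) (Fin 4) ℝ := skewUnit 0 3 - skewUnit 1 2

theorem unitI_eq : unitI = !![0, 1, 0, 0; -1, 0, 0, 0; 0, 0, 0, -1; 0, 0, 1, 0] := by
  ext a b
  fin_cases a <;> fin_cases b <;> simp [unitI, skewUnit]

theorem unitJ_eq : unitJ = !![0, 0, 1, 0; 0, 0, 0, 1; -1, 0, 0, 0; 0, -1, 0, 0] := by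
  ext a b
  fin_cases a <;> fin_cases b <;> simp [unitJ, skewUnit]

theorem unitK_eq : unitK = !![0, 0, 0, 1; 0, 0, -1, 0; 0, 1, 0, 0; -1, 0, 0, 0] := by
  ext a b
  fin_cases a <;> fin_cases b <;> simp [unitK, skewUnit]

theorem unitI_mul_unitI : unitI * unitI = -1 := by
  simp [unitI_eq, ← Matrix.ext_iff, Fin.forall_fin_succ]

theorem unitJ_mul_unitJ : unitJ * unitJ = -1 := by
  simp [unitJ_eq, ← Matrix.ext_iff, Fin.forall_fin_succ]

theorem unitK_mul_unitK : unitK * unitK = -1 := by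
  simp [unitK_eq, ← Matrix.ext_iff, Fin.forall_fin_succ]

theorem unitI_mul_unitJ : unitI * unitJ = unitK := by
  simp [unitI_eq, unitJ_eq, unitK_eq]

theorem unitJ_mul_unitK : unitJ * unitK = unitI := by
  simp [unitI_eq, unitJ_eq, unitK_eq]

theorem unitK_mul_unitI : unitK * unitI = unitJ := by
  simp [unitI_eq, unitJ_eq, unitK_eq]

theorem dydx_skewUnit_mul (a b : Fin 4) (A : Matrix (Fin 4) (Fin 4) ℝ) :
    dydx (skewUnit a b * A) = dy a * ∑ c, A b c • dx c - dy b * ∑ c, A a c • dx c := by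
  have dydx_single_mul (a b : Fin 4) :
      dydx (.single a b 1 * A) = dy a * ∑ c, A b c • dx c := by
    simp [dydx, Matrix.single_mul_eq_updateRow_zero, Matrix.updateRow_apply,
      Finset.mul_sum, Finset.sum_ite_irrel]
  rw [skewUnit, sub_mul, map_sub, dydx_single_mul, dydx_single_mul]

theorem dydx_skewUnit (a b : Fin 4) : dydx (skewUnit a b) = dy a * dx b - dy b * dx a := by
  simpa [Matrix.one_apply] using dydx_skewUnit_mul a b 1

theorem dydx_unitI : dydx unitI = θ1i := by
  simp only [unitI, map_sub, dydx_skewUnit]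
  change dy1 * dx2 - dy2 * dx1 - (dy3 * dx4 - dy4 * dx3) = θ1i
  rw [θ1i]
  abel

theorem dydx_unitJ : dydx unitJ = θ1j := by
  simp only [unitJ, map_add, dydx_skewUnit]
  change dy1 * dx3 - dy3 * dx1 + (dy2 * dx4 - dy4 * dx2) = θ1j
  rw [θ1j]
  abel

theorem dydx_unitK : dydx unitK = θ1k := by
  simp only [unitK, map_sub, dydx_skewUnit]
  change dy1 * dx4 - dy4 * dx1 - (dy2 * dx3 - dy3 * dx2) = θ1k
  rw [θ1k]
  abel

theorem dydx_neg_one : dydx (-1) = θs := by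
  have dydx_one : dydx 1 = ∑ a, dy a * dx a := by simp [dydx, Matrix.one_apply]
  rw [map_neg, dydx_one, Fin.sum_univ_four]
  rfl

theorem inducedDerivation_dyToDx_dy (A : Matrix (Fin 4) (Fin 4) ℝ) (a : Fin 4) :
    inducedDerivation (dyToDx A) (dy a) = ∑ b, A a b • dx b := by
  have apply_single : dyToDx A (Pi.single (Fin.natAdd 4 a) 1) =
      ∑ b, A a b • Pi.single (Fin.castAdd 4 b) 1 := by
    rw [← Pi.basisFun_apply, dyToDx, Module.Basis.constr_basis, Fin.append_right]
  simp only [dy, dx, e8, inducedDerivation_ι, apply_single, map_sum, map_smul]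

theorem inducedDerivation_dyToDx_dy_mul_dy (A : Matrix (Fin 4) (Fin 4) ℝ) (a b : Fin 4) :
    inducedDerivation (dyToDx A) (dy a * dy b) = dydx (skewUnit a b * A) := by
  have dx_mul_dy (c : Fin 4) : dx c * dy b = -(dy b * dx c) :=
    eq_neg_of_add_eq_zero_left (ι_add_mul_swap _ _)
  rw [inducedDerivation_mul, inducedDerivation_dyToDx_dy, inducedDerivation_dyToDx_dy,
    dydx_skewUnit_mul, sub_eq_add_neg]
  simp only [Finset.sum_mul, Finset.mul_sum, smul_mul_assoc, mul_smul_comm, dx_mul_dy, smul_neg,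
    Finset.sum_neg_distrib]

theorem inducedDerivation_dyToDx_θ0i (A : Matrix (Fin 4) (Fin 4) ℝ) :
    inducedDerivation (dyToDx A) θ0i = dydx (unitI * A) := by
  change inducedDerivation (dyToDx A) (dy 0 * dy 1 - dy 2 * dy 3) = _
  simp only [map_sub, inducedDerivation_dyToDx_dy_mul_dy, unitI, sub_mul]

theorem inducedDerivation_dyToDx_θ0j (A : Matrix (Fin 4) (Fin 4) ℝ) :
    inducedDerivation (dyToDx A) θ0j = dydx (unitJ * A) := by
  change inducedDerivation (dyToDx A) (dy 0 * dy 2 + dy 1 * dy 3) = _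
  simp only [map_add, inducedDerivation_dyToDx_dy_mul_dy, unitJ, add_mul]

theorem inducedDerivation_dyToDx_θ0k (A : Matrix (Fin 4) (Fin 4) ℝ) :
    inducedDerivation (dyToDx A) θ0k = dydx (unitK * A) := by
  change inducedDerivation (dyToDx A) (dy 0 * dy 3 - dy 1 * dy 2) = _
  simp only [map_sub, inducedDerivation_dyToDx_dy_mul_dy, unitK, sub_mul]

theorem e8_mul_eq_zero_of_not_nodup {a b c d : Fin 8} (h : ¬[a, b, c, d].Nodup) :
    e8 a * e8 b * (e8 c * e8 d) = 0 :=
  ι_mul_ι_mul_ι_mul_ι_eq_zero_of_not_nodup (fun i => Pi.single i 1) h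

theorem θ0i_mul_θ0j : θ0i * θ0j = 0 := by
  simp [θ0i, θ0j, dy1, dy2, dy3, dy4, mul_add, sub_mul, e8_mul_eq_zero_of_not_nodup]

theorem θ0j_mul_θ0k : θ0j * θ0k = 0 := by
  simp [θ0j, θ0k, dy1, dy2, dy3, dy4, mul_sub, add_mul, e8_mul_eq_zero_of_not_nodup]

theorem θ0k_mul_θ0i : θ0k * θ0i = 0 := by
  simp [θ0k, θ0i, dy1, dy2, dy3, dy4, mul_sub, sub_mul, e8_mul_eq_zero_of_not_nodup]

theorem θ0i_mul_dydx_unitJ_mul (A : Matrix (Fin 4) (Fin 4) ℝ) :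
    θ0i * dydx (unitJ * A) = -(θ0j * dydx (unitI * A)) := by
  rw [← inducedDerivation_dyToDx_θ0i, ← inducedDerivation_dyToDx_θ0j]
  exact mul_inducedDerivation_eq_neg _ θ0i_mul_θ0j
    (add_mem (ι_mul_ι_mem_center _ _) (ι_mul_ι_mem_center _ _))

theorem θ0j_mul_dydx_unitK_mul (A : Matrix (Fin 4) (Fin 4) ℝ) :
    θ0j * dydx (unitK * A) = -(θ0k * dydx (unitJ * A)) := by
  rw [← inducedDerivation_dyToDx_θ0j, ← inducedDerivation_dyToDx_θ0k]
  exact mul_inducedDerivation_eq_neg _ θ0j_mul_θ0k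
    (sub_mem (ι_mul_ι_mem_center _ _) (ι_mul_ι_mem_center _ _))

theorem θ0k_mul_dydx_unitI_mul (A : Matrix (Fin 4) (Fin 4) ℝ) :
    θ0k * dydx (unitI * A) = -(θ0i * dydx (unitK * A)) := by
  rw [← inducedDerivation_dyToDx_θ0k, ← inducedDerivation_dyToDx_θ0i]
  exact mul_inducedDerivation_eq_neg _ θ0k_mul_θ0i
    (sub_mem (ι_mul_ι_mem_center _ _) (ι_mul_ι_mem_center _ _))

theorem theta0_theta1_offdiag :
    (θ0i * θ1j = -(θ0j * θ1i) ∧ θ0i * θ1j = -(θ0k * θs)) ∧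
    (θ0j * θ1k = -(θ0k * θ1j) ∧ θ0j * θ1k = -(θ0i * θs)) ∧
    (θ0k * θ1i = -(θ0i * θ1k) ∧ θ0k * θ1i = -(θ0j * θs)) := by
  have hij : θ0i * θ1j = -(θ0j * θ1i) := by
    simpa [dydx_unitI, dydx_unitJ] using θ0i_mul_dydx_unitJ_mul 1
  have hjk : θ0j * θ1k = -(θ0k * θ1j) := by
    simpa [dydx_unitJ, dydx_unitK] using θ0j_mul_dydx_unitK_mul 1
  have hki : θ0k * θ1i = -(θ0i * θ1k) := by
    simpa [dydx_unitK, dydx_unitI] using θ0k_mul_dydx_unitI_mul 1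
  have his : θ0i * θs = -(θ0j * θ1k) := by
    simpa only [unitJ_mul_unitJ, unitI_mul_unitJ, dydx_neg_one, dydx_unitK] using
      θ0i_mul_dydx_unitJ_mul unitJ
  have hjs : θ0j * θs = -(θ0k * θ1i) := by
    simpa only [unitK_mul_unitK, unitJ_mul_unitK, dydx_neg_one, dydx_unitI] using
      θ0j_mul_dydx_unitK_mul unitK
  have hks : θ0k * θs = -(θ0i * θ1j) := by
    simpa only [unitI_mul_unitI, unitK_mul_unitI, dydx_neg_one, dydx_unitJ] using
      θ0k_mul_dydx_unitI_mul unitI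
  exact
    ⟨⟨hij, (neg_eq_iff_eq_neg.2 hks).symm⟩,
      ⟨hjk, (neg_eq_iff_eq_neg.2 his).symm⟩,
      ⟨hki, (neg_eq_iff_eq_neg.2 hjs).symm⟩⟩

end
end

section
/- The 4-form Θ12 = θ1i∧θ2i + θ1j∧θ2j + θ1k∧θ2k is primitive with respect to the symplectic form θs: Θ12∧θs = 0. -/
/-!
Let `D` be the degree-0 derivation of the exterior algebra with `D dx_a = dy_a` and `D dy_a = 0`.
Then `θ1q = D θ2q` for `q = i, j, k`, and `D θs = -∑ dy_a ∧ dy_a = 0`. The form `θ2q ∧ θ2q` has top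
degree in the `dx_a`, so it is killed by `θs`; applying `D` gives
`0 = D (θ2q ∧ θ2q ∧ θs) = 2 θ1q ∧ θ2q ∧ θs`. Hence each summand of `Θ12` is already primitive.
-/

noncomputable section

open ExteriorAlgebra

section Derivation

variable {R M : Type*} [CommRing R] [AddCommGroup M] [Module R M]

theorem ι_mul_ι_swap (u v : M) : ι R u * ι R v = -(ι R v * ι R u) :=
  eq_neg_of_add_eq_zero_left (ι_add_mul_swap u v)

theorem commute_ι_mul_ι (u v : M) (a : ExteriorAlgebra R M) : Commute (ι R u * ι R v) a := by
  induction a using ExteriorAlgebra.induction with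
  | algebraMap r => exact Algebra.commute_algebraMap_right r _
  | ι w =>
    calc ι R u * ι R v * ι R w
        = -(ι R u * ι R w * ι R v) := by rw [mul_assoc, ι_mul_ι_swap v w, mul_neg, mul_assoc]
      _ = ι R w * (ι R u * ι R v) := by rw [ι_mul_ι_swap u w, neg_mul, neg_neg, mul_assoc]
  | mul a b ha hb => exact ha.mul_right hb
  | add a b ha hb => exact ha.add_right hb

theorem commute_of_mem_exteriorPower_two {ω : ExteriorAlgebra R M} (hω : ω ∈ ⋀[R]^2 M)
    (a : ExteriorAlgebra R M) : Commute ω a := by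
  rw [exteriorPower, pow_two] at hω
  induction hω using Submodule.mul_induction_on' with
  | mem_mul_mem _ hu _ hv =>
    obtain ⟨u, rfl⟩ := hu
    obtain ⟨v, rfl⟩ := hv
    exact commute_ι_mul_ι u v a
  | add _ _ _ _ h₁ h₂ => exact h₁.add_left h₂

theorem ι_mul_ι_mem_span_range_ι_sq {I : Type*} (x : I → M) (a b : I) :
    ι R (x a) * ι R (x b) ∈ Submodule.span R (Set.range fun a => ι R (x a)) ^ 2 := by
  rw [pow_two]
  exact Submodule.mul_mem_mul (Submodule.subset_span ⟨a, rfl⟩) (Submodule.subset_span ⟨b, rfl⟩)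

theorem span_range_ι_pow_eq_bot {I : Type*} [Fintype I] (x : I → M) {n : ℕ}
    (hn : Fintype.card I < n) : Submodule.span R (Set.range fun a => ι R (x a)) ^ n = ⊥ := by
  rw [Submodule.span_pow, Submodule.span_eq_bot]
  intro z hz
  obtain ⟨v, rfl⟩ := Set.mem_pow.mp hz
  choose g hg using fun i => (v i).2
  have not_injective : ¬Function.Injective (x ∘ g) := fun h =>
    hn.not_ge (by simpa using Fintype.card_le_of_injective g h.of_comp)
  simpa only [ιMulti_apply, Function.comp_apply, hg] using
    ιMulti_eq_zero_of_not_inj (R := R) not_injective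

/-- The algebra homomorphism `a ↦ a + ε D a` into the dual numbers over the exterior algebra,
where `D` is the derivation extending `f`. Since Mathlib's `Derivation` requires a commutative
algebra, this is how `D` is constructed. -/
def dualNumberLift (f : M →ₗ[R] M) : ExteriorAlgebra R M →ₐ[R] DualNumber (ExteriorAlgebra R M) :=
  ExteriorAlgebra.lift R ⟨LinearMap.prod (ι R) (ι R ∘ₗ f), fun m => by
    ext
    · exact ι_sq_zero m
    · exact ι_add_mul_swap m (f m)⟩

/-- The derivation of degree zero of the exterior algebra that extends an endomorphism `f` of the
underlying module. -/
def derivationExtension (f : M →ₗ[R] M) : ExteriorAlgebra R M →ₗ[R] ExteriorAlgebra R M where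
  toFun a := (dualNumberLift f a).snd
  map_add' a b := by rw [map_add, TrivSqZeroExt.snd_add]
  map_smul' r a := by rw [map_smul, TrivSqZeroExt.snd_smul, RingHom.id_apply]

variable (f : M →ₗ[R] M)

theorem dualNumberLift_ι (m : M) : dualNumberLift f (ι R m) = (ι R m, ι R (f m)) :=
  lift_ι_apply R _ _ m

theorem fst_dualNumberLift (a : ExteriorAlgebra R M) : (dualNumberLift f a).fst = a := by
  have fst_comp : (TrivSqZeroExt.fstHom R _ _).comp (dualNumberLift f) = AlgHom.id R _ := by
    ext m
    exact congrArg Prod.fst (dualNumberLift_ι f m)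
  exact DFunLike.congr_fun fst_comp a

theorem derivationExtension_ι (m : M) : derivationExtension f (ι R m) = ι R (f m) :=
  congrArg Prod.snd (dualNumberLift_ι f m)

theorem derivationExtension_mul (a b : ExteriorAlgebra R M) :
    derivationExtension f (a * b) =
      derivationExtension f a * b + a * derivationExtension f b := by
  change (dualNumberLift f (a * b)).snd = _
  rw [map_mul, DualNumber.snd_mul, fst_dualNumberLift, fst_dualNumberLift, add_comm]
  rfl

theorem derivationExtension_pow_succ {a : ExteriorAlgebra R M}
    (ha : Commute a (derivationExtension f a)) (k : ℕ) :
    derivationExtension f (a ^ (k + 1)) = (k + 1) • (derivationExtension f a * a ^ k) := by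
  induction k with
  | zero => simp
  | succ k ih =>
    rw [pow_succ, derivationExtension_mul, ih, smul_mul_assoc, mul_assoc, ← pow_succ,
      (ha.pow_left (k + 1)).eq, succ_nsmul _ (k + 1)]

variable {f} in
theorem derivationExtension_mul_eq_zero {a b : ExteriorAlgebra R M}
    (hab : a * b = 0) (hb : derivationExtension f b = 0) : derivationExtension f a * b = 0 := by
  simpa [derivationExtension_mul, hb] using congrArg (derivationExtension f) hab

variable {I : Type*} [Fintype I] {x y : I → M}

theorem mul_sum_ι_mul_ι_eq_zero {n : ℕ} (hn : Fintype.card I ≤ n) {α : ExteriorAlgebra R M}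
    (hα : α ∈ Submodule.span R (Set.range fun a => ι R (x a)) ^ n) :
    α * ∑ a, ι R (y a) * ι R (x a) = 0 := by
  have mul_ι_x_eq_zero (a : I) : α * ι R (x a) = 0 := by
    rw [← Submodule.mem_bot R, ← span_range_ι_pow_eq_bot x (Nat.lt_succ_of_le hn), pow_succ]
    exact Submodule.mul_mem_mul hα (Submodule.subset_span ⟨a, rfl⟩)
  rw [Finset.mul_sum]
  refine Finset.sum_eq_zero fun a _ => ?_
  rw [ι_mul_ι_swap, mul_neg, ← mul_assoc, mul_ι_x_eq_zero, zero_mul, neg_zero]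

variable {f}

theorem derivationExtension_sum_ι_mul_ι (hx : ∀ a, f (x a) = y a) (hy : ∀ a, f (y a) = 0) :
    derivationExtension f (∑ a, ι R (y a) * ι R (x a)) = 0 := by
  simp [derivationExtension_mul, derivationExtension_ι, hx, hy]

theorem nsmul_derivationExtension_mul_pow_mul_sum_eq_zero
    (hx : ∀ a, f (x a) = y a) (hy : ∀ a, f (y a) = 0) {k : ℕ}
    (hk : Fintype.card I ≤ 2 * (k + 1)) {ω : ExteriorAlgebra R M}
    (hω : ω ∈ Submodule.span R (Set.range fun a => ι R (x a)) ^ 2) :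
    (k + 1) • (derivationExtension f ω * ω ^ k * ∑ a, ι R (y a) * ι R (x a)) = 0 := by
  have ω_mem : ω ∈ ⋀[R]^2 M := by
    refine pow_le_pow_left' (Submodule.span_le.2 ?_) 2 hω
    rintro _ ⟨a, rfl⟩
    exact LinearMap.mem_range_self _ _
  have pow_mem : ω ^ (k + 1) ∈ Submodule.span R (Set.range fun a => ι R (x a)) ^ (2 * (k + 1)) := by
    rw [pow_mul]
    exact Submodule.pow_mem_pow _ hω (k + 1)
  rw [← smul_mul_assoc, ← derivationExtension_pow_succ f (commute_of_mem_exteriorPower_two ω_mem _)]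
  exact derivationExtension_mul_eq_zero (mul_sum_ι_mul_ι_eq_zero hk pow_mem)
    (derivationExtension_sum_ι_mul_ι hx hy)

end Derivation

section QuaternionicPlane

/-- The vectors whose images under `ι` are `dx1, …, dx4`. -/
def xVec (a : Fin 4) : Fin 8 → ℝ := Pi.single (Fin.castAdd 4 a) 1

/-- The vectors whose images under `ι` are `dy1, …, dy4`. -/
def yVec (a : Fin 4) : Fin 8 → ℝ := Pi.single (Fin.natAdd 4 a) 1

/-- The nilpotent endomorphism sending each `dx` to the corresponding `dy` and each `dy` to `0`. -/
def xToY : (Fin 8 → ℝ) →ₗ[ℝ] (Fin 8 → ℝ) :=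
  (Pi.basisFun ℝ (Fin 8)).constr ℝ (Fin.addCases (m := 4) (n := 4) yVec 0)

theorem xToY_xVec (a : Fin 4) : xToY (xVec a) = yVec a := by
  rw [xToY, xVec, ← Pi.basisFun_apply, Module.Basis.constr_basis]
  exact Fin.addCases_left a

theorem xToY_yVec (a : Fin 4) : xToY (yVec a) = 0 := by
  rw [xToY, yVec, ← Pi.basisFun_apply, Module.Basis.constr_basis]
  exact Fin.addCases_right a

theorem derivationExtension_xToY_ι_mul_ι (a b : Fin 4) :
    derivationExtension xToY (ι ℝ (xVec a) * ι ℝ (xVec b)) =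
      ι ℝ (yVec a) * ι ℝ (xVec b) - ι ℝ (yVec b) * ι ℝ (xVec a) := by
  rw [derivationExtension_mul, derivationExtension_ι, derivationExtension_ι, xToY_xVec, xToY_xVec,
    ι_mul_ι_swap (xVec a), sub_eq_add_neg]

theorem θ1i_eq_derivationExtension : θ1i = derivationExtension xToY θ2i :=
  calc θ1i = (dy1 * dx2 - dy2 * dx1) - (dy3 * dx4 - dy4 * dx3) := by rw [θ1i]; abel
    _ = derivationExtension xToY θ2i := by
      rw [θ2i, map_sub]
      exact (congrArg₂ _ (derivationExtension_xToY_ι_mul_ι 0 1)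
        (derivationExtension_xToY_ι_mul_ι 2 3)).symm

theorem θ1j_eq_derivationExtension : θ1j = derivationExtension xToY θ2j :=
  calc θ1j = (dy1 * dx3 - dy3 * dx1) + (dy2 * dx4 - dy4 * dx2) := by rw [θ1j]; abel
    _ = derivationExtension xToY θ2j := by
      rw [θ2j, map_add]
      exact (congrArg₂ _ (derivationExtension_xToY_ι_mul_ι 0 2)
        (derivationExtension_xToY_ι_mul_ι 1 3)).symm

theorem θ1k_eq_derivationExtension : θ1k = derivationExtension xToY θ2k :=
  calc θ1k = (dy1 * dx4 - dy4 * dx1) - (dy2 * dx3 - dy3 * dx2) := by rw [θ1k]; abel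
    _ = derivationExtension xToY θ2k := by
      rw [θ2k, map_sub]
      exact (congrArg₂ _ (derivationExtension_xToY_ι_mul_ι 0 3)
        (derivationExtension_xToY_ι_mul_ι 1 2)).symm

theorem θs_eq_neg_sum : θs = -∑ a, ι ℝ (yVec a) * ι ℝ (xVec a) := by
  rw [Fin.sum_univ_four]
  rfl

theorem derivationExtension_xToY_mul_self_mul_θs_eq_zero {ω : ExteriorAlgebra ℝ (Fin 8 → ℝ)}
    (hω : ω ∈ Submodule.span ℝ (Set.range fun a => ι ℝ (xVec a)) ^ 2) :
    derivationExtension xToY ω * ω * θs = 0 := by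
  have two_smul_eq_zero := nsmul_derivationExtension_mul_pow_mul_sum_eq_zero
    xToY_xVec xToY_yVec (k := 1) (by simp) hω
  rw [pow_one, ← Nat.cast_smul_eq_nsmul ℝ] at two_smul_eq_zero
  rw [θs_eq_neg_sum, mul_neg, (smul_eq_zero.mp two_smul_eq_zero).resolve_left (by norm_num),
    neg_zero]

theorem θ1i_mul_θ2i_mul_θs_eq_zero : θ1i * θ2i * θs = 0 := by
  rw [θ1i_eq_derivationExtension]
  exact derivationExtension_xToY_mul_self_mul_θs_eq_zero
    (sub_mem (ι_mul_ι_mem_span_range_ι_sq xVec 0 1) (ι_mul_ι_mem_span_range_ι_sq xVec 2 3))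

theorem θ1j_mul_θ2j_mul_θs_eq_zero : θ1j * θ2j * θs = 0 := by
  rw [θ1j_eq_derivationExtension]
  exact derivationExtension_xToY_mul_self_mul_θs_eq_zero
    (add_mem (ι_mul_ι_mem_span_range_ι_sq xVec 0 2) (ι_mul_ι_mem_span_range_ι_sq xVec 1 3))

theorem θ1k_mul_θ2k_mul_θs_eq_zero : θ1k * θ2k * θs = 0 := by
  rw [θ1k_eq_derivationExtension]
  exact derivationExtension_xToY_mul_self_mul_θs_eq_zero
    (sub_mem (ι_mul_ι_mem_span_range_ι_sq xVec 0 3) (ι_mul_ι_mem_span_range_ι_sq xVec 1 2))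

end QuaternionicPlane

theorem Theta12_primitive :
    (θ1i * θ2i + θ1j * θ2j + θ1k * θ2k) * θs = 0 := by
  rw [add_mul, add_mul, θ1i_mul_θ2i_mul_θs_eq_zero, θ1j_mul_θ2j_mul_θs_eq_zero,
    θ1k_mul_θ2k_mul_θs_eq_zero, add_zero, add_zero]

end
end
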